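/- In the Z₃-graded quantum Weyl superalgebra W_q(2|1), the elements (∂x)³ and (∂y)³ are central: each of them commutes with all six generators x, y, θ, ∂x, ∂y, ∂θ (and hence with every element of the algebra). -/

import Mathlib

/-!
`W_q(2|1)`: the Z₃-graded quantum Weyl superalgebra, the unital associative
ℂ-algebra with generators `x`, `y`, `θ`, `∂x`, `∂y`, `∂θ`, quotient of the free
algebra by the two-sided ideal generated by the relations
`xy = q·yx`, `xθ = q·θx`, `yθ = q²·θy`, `y³ = 0`, `θ³ = 0`;
`∂x·x = 1 + q·x·∂x + (q−1)·θ·∂θ`, `∂x·y = q²·y·∂x`, `∂x·θ = θ·∂x`,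
`∂y·x = q²·x·∂y`, `∂y·θ = q²·θ·∂y`, `∂y·y = 1 + q·y·∂y + (q−1)(x·∂x + θ·∂θ)`,
`∂θ·x = q·x·∂θ`, `∂θ·y = q²·y·∂θ`, `∂θ·θ = 1 + q·θ·∂θ`;
`∂x·∂y = q²·∂y·∂x`, `∂y·∂θ = q·∂θ·∂y`, `∂θ·∂x = ∂x·∂θ`, `(∂θ)³ = 0`.
-/

noncomputable section

inductive Gen : Type
  | x | y | th | px | py | pth

abbrev FA : Type := FreeAlgebra ℂ Gen

def Xf : FA := FreeAlgebra.ι ℂ Gen.x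
def Yf : FA := FreeAlgebra.ι ℂ Gen.y
def Tf : FA := FreeAlgebra.ι ℂ Gen.th
def PXf : FA := FreeAlgebra.ι ℂ Gen.px
def PYf : FA := FreeAlgebra.ι ℂ Gen.py
def PTf : FA := FreeAlgebra.ι ℂ Gen.pth

/-- The defining relations of the Z₃-graded quantum Weyl superalgebra. -/
inductive QRel (q : ℂ) : FA → FA → Prop
  | xy : QRel q (Xf * Yf) (q • (Yf * Xf))
  | xth : QRel q (Xf * Tf) (q • (Tf * Xf))
  | yth : QRel q (Yf * Tf) ((q ^ 2) • (Tf * Yf))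
  | ycube : QRel q (Yf ^ 3) 0
  | thcube : QRel q (Tf ^ 3) 0
  | pxx : QRel q (PXf * Xf) (1 + q • (Xf * PXf) + (q - 1) • (Tf * PTf))
  | pxy : QRel q (PXf * Yf) ((q ^ 2) • (Yf * PXf))
  | pxth : QRel q (PXf * Tf) (Tf * PXf)
  | pyx : QRel q (PYf * Xf) ((q ^ 2) • (Xf * PYf))
  | pyth : QRel q (PYf * Tf) ((q ^ 2) • (Tf * PYf))
  | pyy : QRel q (PYf * Yf) (1 + q • (Yf * PYf) + (q - 1) • (Xf * PXf + Tf * PTf))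
  | pthx : QRel q (PTf * Xf) (q • (Xf * PTf))
  | pthy : QRel q (PTf * Yf) ((q ^ 2) • (Yf * PTf))
  | pthth : QRel q (PTf * Tf) (1 + q • (Tf * PTf))
  | pxpy : QRel q (PXf * PYf) ((q ^ 2) • (PYf * PXf))
  | pypth : QRel q (PYf * PTf) (q • (PTf * PYf))
  | pthpx : QRel q (PTf * PXf) (PXf * PTf)
  | pthcube : QRel q (PTf ^ 3) 0

/-- The Z₃-graded quantum Weyl superalgebra `W_q(2|1)`. -/
abbrev Wsp (q : ℂ) : Type := RingQuot (QRel q)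

def Xg (q : ℂ) : Wsp q := RingQuot.mkAlgHom ℂ (QRel q) Xf
def Yg (q : ℂ) : Wsp q := RingQuot.mkAlgHom ℂ (QRel q) Yf
def Tg (q : ℂ) : Wsp q := RingQuot.mkAlgHom ℂ (QRel q) Tf
def PXg (q : ℂ) : Wsp q := RingQuot.mkAlgHom ℂ (QRel q) PXf
def PYg (q : ℂ) : Wsp q := RingQuot.mkAlgHom ℂ (QRel q) PYf
def PTg (q : ℂ) : Wsp q := RingQuot.mkAlgHom ℂ (QRel q) PTf

/-!
Let `q` be a primitive cube root of unity and let `∂` be `∂x` or `∂y`. Up to a power of `q`, `∂`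
commutes with every generator other than its own coordinate, and these factors disappear in `∂³`.
For the coordinate `t` of `∂` one has `∂t = N + q·t∂` with `∂` commuting with `N`, so that
`∂³t = (1 + q + q²)·N∂² + q³·t∂³ = t∂³`.
-/

section ScalarCommutation

variable {M A : Type*} [Monoid M] [Monoid A] [MulAction M A]
  [IsScalarTower M A A] {a b b' : A} {c c' : M}

theorem semiconjBy_smul_symm (hc : c' * c = 1) (h : SemiconjBy a b (c • b)) :
    SemiconjBy b a (c' • a) := by
  rw [SemiconjBy, smul_mul_assoc, h.eq, smul_mul_assoc, smul_smul, hc, one_smul]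

variable [SMulCommClass M A A]

theorem semiconjBy_pow_left_smul (h : SemiconjBy a b (c • b)) (k : ℕ) :
    SemiconjBy (a ^ k) b (c ^ k • b) := by
  induction k with
  | zero => simp
  | succ k ih =>
    have hk : SemiconjBy (a ^ k) (c • b) (c ^ (k + 1) • b) := by
      rw [SemiconjBy, mul_smul_comm, ih.eq, ← smul_mul_assoc, smul_smul, ← pow_succ']
    rw [pow_succ a]
    exact hk.mul_left h

theorem commute_pow_of_semiconjBy_smul {k : ℕ} (hc : c ^ k = 1) (h : SemiconjBy a b (c • b)) :
    Commute (a ^ k) b := by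
  have hk : SemiconjBy (a ^ k) b (c ^ k • b) := semiconjBy_pow_left_smul h k
  rwa [hc, one_smul] at hk

theorem commute_mul_of_semiconjBy_smul (hc : c * c' = 1) (h : SemiconjBy a b (c • b))
    (h' : SemiconjBy a b' (c' • b')) : Commute a (b * b') := by
  have hmul : SemiconjBy a (b * b') (c • b * c' • b') := h.mul_right h'
  rwa [smul_mul_assoc, mul_smul_comm, smul_smul, hc, one_smul] at hmul

end ScalarCommutation

theorem pow_eq_one_of_geom_sum_eq_zero {R : Type*} [Semiring R] {c : R} {k : ℕ}
    (hc : ∑ i ∈ Finset.range k, c ^ i = 0) : c ^ k = 1 := by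
  calc c ^ k = ∑ i ∈ Finset.range (k + 1), c ^ i := by rw [Finset.sum_range_succ, hc, zero_add]
    _ = 1 := by rw [geom_sum_succ, hc, mul_zero, zero_add]

section WeylRelation

variable {R A : Type*} [CommSemiring R] [Semiring A] [Algebra R A] {a b n : A} {c : R}

theorem pow_succ_mul_of_mul_eq_add_smul (hn : Commute a n) (h : a * b = n + c • (b * a)) (k : ℕ) :
    a ^ (k + 1) * b =
      (∑ i ∈ Finset.range (k + 1), c ^ i) • (n * a ^ k) + c ^ (k + 1) • (b * a ^ (k + 1)) := by
  induction k with
  | zero => simpa using h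
  | succ k ih =>
    calc a ^ (k + 2) * b = n * a ^ (k + 1) + c • (a ^ (k + 1) * b * a) := by
          rw [pow_succ, mul_assoc, h, mul_add, (hn.pow_left (k + 1)).eq, mul_smul_comm,
            ← mul_assoc]
      _ = n * a ^ (k + 1) + c • ((∑ i ∈ Finset.range (k + 1), c ^ i) • (n * a ^ (k + 1)) +
            c ^ (k + 1) • (b * a ^ (k + 2))) := by
          rw [ih, add_mul, smul_mul_assoc, smul_mul_assoc, mul_assoc n, mul_assoc b, ← pow_succ,
            ← pow_succ]
      _ = (∑ i ∈ Finset.range (k + 2), c ^ i) • (n * a ^ (k + 1)) +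
            c ^ (k + 2) • (b * a ^ (k + 2)) := by
          rw [geom_sum_succ (n := k + 1)]
          module

theorem commute_pow_of_mul_eq_add_smul {k : ℕ} (hc : ∑ i ∈ Finset.range k, c ^ i = 0)
    (hn : Commute a n) (h : a * b = n + c • (b * a)) : Commute (a ^ k) b := by
  cases k with
  | zero => simp
  | succ k =>
    rw [Commute, SemiconjBy, pow_succ_mul_of_mul_eq_add_smul hn h, hc,
      pow_eq_one_of_geom_sum_eq_zero hc, zero_smul, zero_add, one_smul]

end WeylRelation

section Presentation

variable {R A : Type*} [CommSemiring R] [Semiring A] [Algebra R A]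

theorem mem_center_of_surjective_of_forall_commute_ι {X : Type*}
    {f : FreeAlgebra R X →ₐ[R] A} (hf : Function.Surjective f) {z : A}
    (hz : ∀ g, Commute z (f (FreeAlgebra.ι R g))) : z ∈ Subalgebra.center R A := by
  suffices h : ∀ w, Commute z (f w) from
    Subalgebra.mem_center_iff.mpr (hf.forall.mpr fun w ↦ (h w).symm)
  intro w
  induction w with
  | grade0 r => rw [AlgHom.commutes]; exact Algebra.commute_algebraMap_right r z
  | grade1 g => exact hz g
  | mul u v hu hv => rw [map_mul]; exact hu.mul_right hv
  | add u v hu hv => rw [map_add]; exact hu.add_right hv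

theorem semiconjBy_mkAlgHom_of_rel {r : A → A → Prop} {a b : A} {c : R}
    (h : r (a * b) (c • (b * a))) :
    SemiconjBy (RingQuot.mkAlgHom R r a) (RingQuot.mkAlgHom R r b)
      (c • RingQuot.mkAlgHom R r b) := by
  simpa only [SemiconjBy, map_mul, map_smul, smul_mul_assoc] using RingQuot.mkAlgHom_rel R h

theorem commute_mkAlgHom_of_rel {r : A → A → Prop} {a b : A} (h : r (a * b) (b * a)) :
    Commute (RingQuot.mkAlgHom R r a) (RingQuot.mkAlgHom R r b) := by
  simpa only [Commute, SemiconjBy, map_mul] using RingQuot.mkAlgHom_rel R h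

end Presentation

namespace Wsp

variable {q : ℂ}

theorem mem_center_of_commute_generators {z : Wsp q} (hx : Commute z (Xg q))
    (hy : Commute z (Yg q)) (hth : Commute z (Tg q)) (hpx : Commute z (PXg q))
    (hpy : Commute z (PYg q)) (hpth : Commute z (PTg q)) : z ∈ Subalgebra.center ℂ (Wsp q) :=
  mem_center_of_surjective_of_forall_commute_ι (RingQuot.mkAlgHom_surjective ℂ (QRel q)) fun
    | .x => hx
    | .y => hy
    | .th => hth
    | .px => hpx
    | .py => hpy
    | .pth => hpth

theorem semiconjBy_PXg_Yg : SemiconjBy (PXg q) (Yg q) (q ^ 2 • Yg q) :=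
  semiconjBy_mkAlgHom_of_rel .pxy

theorem commute_PXg_Tg : Commute (PXg q) (Tg q) :=
  commute_mkAlgHom_of_rel .pxth

theorem semiconjBy_PXg_PYg : SemiconjBy (PXg q) (PYg q) (q ^ 2 • PYg q) :=
  semiconjBy_mkAlgHom_of_rel .pxpy

theorem commute_PXg_PTg : Commute (PXg q) (PTg q) :=
  (commute_mkAlgHom_of_rel .pthpx).symm

theorem semiconjBy_PYg_Xg : SemiconjBy (PYg q) (Xg q) (q ^ 2 • Xg q) :=
  semiconjBy_mkAlgHom_of_rel .pyx

theorem semiconjBy_PYg_Tg : SemiconjBy (PYg q) (Tg q) (q ^ 2 • Tg q) :=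
  semiconjBy_mkAlgHom_of_rel .pyth

theorem semiconjBy_PYg_PXg (hq : q ^ 3 = 1) : SemiconjBy (PYg q) (PXg q) (q • PXg q) :=
  semiconjBy_smul_symm ((pow_succ' q 2).symm.trans hq) semiconjBy_PXg_PYg

theorem semiconjBy_PYg_PTg : SemiconjBy (PYg q) (PTg q) (q • PTg q) :=
  semiconjBy_mkAlgHom_of_rel .pypth

theorem PXg_mul_Xg :
    PXg q * Xg q = 1 + (q - 1) • (Tg q * PTg q) + q • (Xg q * PXg q) := by
  rw [add_right_comm]
  simpa only [map_mul, map_add, map_smul, map_one] using!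
    RingQuot.mkAlgHom_rel ℂ (QRel.pxx (q := q))

theorem PYg_mul_Yg :
    PYg q * Yg q = 1 + (q - 1) • (Xg q * PXg q + Tg q * PTg q) + q • (Yg q * PYg q) := by
  rw [add_right_comm]
  simpa only [map_mul, map_add, map_smul, map_one] using!
    RingQuot.mkAlgHom_rel ℂ (QRel.pyy (q := q))

theorem commute_PXg_cube_Xg (hq : IsPrimitiveRoot q 3) : Commute (PXg q ^ 3) (Xg q) := by
  have hθ : Commute (PXg q) (Tg q * PTg q) := commute_PXg_Tg.mul_right commute_PXg_PTg
  exact commute_pow_of_mul_eq_add_smul (hq.geom_sum_eq_zero (by norm_num))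
    ((Commute.one_right _).add_right (hθ.smul_right _)) PXg_mul_Xg

theorem commute_PYg_cube_Yg (hq : IsPrimitiveRoot q 3) : Commute (PYg q ^ 3) (Yg q) := by
  have hq2 : q ^ 2 * q = 1 := (pow_succ q 2).symm.trans hq.pow_eq_one
  have hx : Commute (PYg q) (Xg q * PXg q) :=
    commute_mul_of_semiconjBy_smul hq2 semiconjBy_PYg_Xg (semiconjBy_PYg_PXg hq.pow_eq_one)
  have hθ : Commute (PYg q) (Tg q * PTg q) :=
    commute_mul_of_semiconjBy_smul hq2 semiconjBy_PYg_Tg semiconjBy_PYg_PTg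
  exact commute_pow_of_mul_eq_add_smul (hq.geom_sum_eq_zero (by norm_num))
    ((Commute.one_right _).add_right ((hx.add_right hθ).smul_right _)) PYg_mul_Yg

theorem PXg_cube_mem_center (hq : IsPrimitiveRoot q 3) :
    PXg q ^ 3 ∈ Subalgebra.center ℂ (Wsp q) := by
  have hq2 : (q ^ 2) ^ 3 = 1 := by rw [pow_right_comm, hq.pow_eq_one, one_pow]
  exact mem_center_of_commute_generators
    (hx := commute_PXg_cube_Xg hq)
    (hy := commute_pow_of_semiconjBy_smul hq2 semiconjBy_PXg_Yg)
    (hth := commute_PXg_Tg.pow_left 3)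
    (hpx := Commute.pow_self _ 3)
    (hpy := commute_pow_of_semiconjBy_smul hq2 semiconjBy_PXg_PYg)
    (hpth := commute_PXg_PTg.pow_left 3)

theorem PYg_cube_mem_center (hq : IsPrimitiveRoot q 3) :
    PYg q ^ 3 ∈ Subalgebra.center ℂ (Wsp q) := by
  have hq2 : (q ^ 2) ^ 3 = 1 := by rw [pow_right_comm, hq.pow_eq_one, one_pow]
  exact mem_center_of_commute_generators
    (hx := commute_pow_of_semiconjBy_smul hq2 semiconjBy_PYg_Xg)
    (hy := commute_PYg_cube_Yg hq)
    (hth := commute_pow_of_semiconjBy_smul hq2 semiconjBy_PYg_Tg)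
    (hpx := commute_pow_of_semiconjBy_smul hq.pow_eq_one (semiconjBy_PYg_PXg hq.pow_eq_one))
    (hpy := Commute.pow_self _ 3)
    (hpth := commute_pow_of_semiconjBy_smul hq.pow_eq_one semiconjBy_PYg_PTg)

end Wsp

/-- In `W_q(2|1)` the elements `(∂x)³` and `(∂y)³` are central: each commutes
with all six generators `x`, `y`, `θ`, `∂x`, `∂y`, `∂θ` (and hence with every
element of the algebra). -/
theorem partial_cubes_central (q : ℂ) (hq3 : q ^ 3 = 1) (hq1 : q ≠ 1) :
    ((PXg q) ^ 3 * Xg q = Xg q * (PXg q) ^ 3 ∧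
     (PXg q) ^ 3 * Yg q = Yg q * (PXg q) ^ 3 ∧
     (PXg q) ^ 3 * Tg q = Tg q * (PXg q) ^ 3 ∧
     (PXg q) ^ 3 * PXg q = PXg q * (PXg q) ^ 3 ∧
     (PXg q) ^ 3 * PYg q = PYg q * (PXg q) ^ 3 ∧
     (PXg q) ^ 3 * PTg q = PTg q * (PXg q) ^ 3 ∧
     (∀ a : Wsp q, (PXg q) ^ 3 * a = a * (PXg q) ^ 3)) ∧
    ((PYg q) ^ 3 * Xg q = Xg q * (PYg q) ^ 3 ∧
     (PYg q) ^ 3 * Yg q = Yg q * (PYg q) ^ 3 ∧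
     (PYg q) ^ 3 * Tg q = Tg q * (PYg q) ^ 3 ∧
     (PYg q) ^ 3 * PXg q = PXg q * (PYg q) ^ 3 ∧
     (PYg q) ^ 3 * PYg q = PYg q * (PYg q) ^ 3 ∧
     (PYg q) ^ 3 * PTg q = PTg q * (PYg q) ^ 3 ∧
     (∀ a : Wsp q, (PYg q) ^ 3 * a = a * (PYg q) ^ 3)) := by
  have hq : IsPrimitiveRoot q 3 := IsPrimitiveRoot.iff_orderOf.mpr (orderOf_eq_prime hq3 hq1)
  have hx (a : Wsp q) : PXg q ^ 3 * a = a * PXg q ^ 3 :=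
    (Subalgebra.mem_center_iff.mp (Wsp.PXg_cube_mem_center hq) a).symm
  have hy (a : Wsp q) : PYg q ^ 3 * a = a * PYg q ^ 3 :=
    (Subalgebra.mem_center_iff.mp (Wsp.PYg_cube_mem_center hq) a).symm
  exact ⟨⟨hx _, hx _, hx _, hx _, hx _, hx _, hx⟩, hy _, hy _, hy _, hy _, hy _, hy _, hy⟩
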